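/- Let μ be an absolutely continuous finite complex Borel measure on [0,1) such that t·|μ|([0,1−t)) → 0 as t → 0⁺. Then the operator D̄_μ on M[0,1) defined by D̄_μ ν = (Xν)*μ is a compact operator. -/

import Mathlib

open MeasureTheory Set Filter Topology

noncomputable section

/-- Integral of a complex-valued function against a complex (Borel) measure,
defined via the Jordan decompositions of the real and imaginary parts. -/
def cInt {X : Type} [MeasurableSpace X] (μ : ComplexMeasure X) (f : X → ℂ) : ℂ :=
  ((∫ x, f x ∂μ.re.toJordanDecomposition.posPart) -
      ∫ x, f x ∂μ.re.toJordanDecomposition.negPart) +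
    Complex.I * ((∫ x, f x ∂μ.im.toJordanDecomposition.posPart) -
      ∫ x, f x ∂μ.im.toJordanDecomposition.negPart)

/-- A (positive) measure playing the role of the total variation `|μ|` of a complex
measure `μ` (it is equivalent to the classical total variation: `|μ| ≤ cTV μ ≤ 2|μ|`). -/
def cTV {X : Type} [MeasurableSpace X] (μ : ComplexMeasure X) : Measure X :=
  μ.re.totalVariation + μ.im.totalVariation

/-- `μ` is concentrated on the set `A`, i.e. `μ` is a measure "on `A`". -/
def ConcOn {X : Type} [MeasurableSpace X] (μ : ComplexMeasure X) (A : Set X) : Prop :=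
  ∀ E : Set X, MeasurableSet E → E ⊆ Aᶜ → μ E = 0

/-- `ρ` is the convolution `(Xν) * μ` of the complex measures `ν, μ` on `[0,1)`,
characterized by `ρ E = ∫∫ 1_E (t+s) t dμ(s) dν(t)` for Borel `E ⊆ [0,1)`. -/
def IsXConv (μ ν ρ : ComplexMeasure ℝ) : Prop :=
  ConcOn ρ (Ico 0 1) ∧
    ∀ E : Set ℝ, MeasurableSet E → E ⊆ Ico (0 : ℝ) 1 →
      ρ E = cInt ν fun t => (t : ℂ) * cInt μ fun s => E.indicator (1 : ℝ → ℂ) (t + s)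

/-!
With `g ∈ L¹` the density of `μ`, the convolution `(Xν) * μ` has density `∫ t τ_t g dν(t)`, a
Bochner integral in `L¹`. Translation is continuous on `L¹`, so `t ↦ t τ_t g` maps compact sets to
compact sets, and the integral of it against a bounded positive measure lies in a bounded multiple
of a closed convex hull, which is compact by Mazur's theorem. A complex measure is a combination of
four positive ones with coefficients `1, i, -1, -i`, so the densities of `(Xν) * μ` for `ν` in a
ball lie in a compact subset of `L¹`, and `L¹` convergence of densities is convergence in total
variation.
-/

section JordanParts

variable {X : Type} [MeasurableSpace X] {E F : Type*} [NormedAddCommGroup E] [NormedSpace ℂ E]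
  [NormedAddCommGroup F] [NormedSpace ℂ F]

/-- The four positive measures `μ₀, μ₁, μ₂, μ₃` with `μ = ∑ j, i ^ j μⱼ` obtained from the Jordan
decompositions of the real and imaginary parts of `μ`. -/
def jordanPart (μ : ComplexMeasure X) : Fin 4 → Measure X :=
  ![μ.re.toJordanDecomposition.posPart, μ.im.toJordanDecomposition.posPart,
    μ.re.toJordanDecomposition.negPart, μ.im.toJordanDecomposition.negPart]

/-- The integral of a vector-valued function against a complex measure, as the combination of
Bochner integrals against its four Jordan parts; for scalar functions it is `cInt`. -/
def jordanIntegral (μ : ComplexMeasure X) (f : X → E) : E :=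
  ∑ j : Fin 4, Complex.I ^ (j : ℕ) • ∫ x, f x ∂jordanPart μ j

theorem cTV_eq_sum_jordanPart (μ : ComplexMeasure X) : cTV μ = ∑ j, jordanPart μ j := by
  simp only [cTV, SignedMeasure.totalVariation, jordanPart, Fin.sum_univ_four, Matrix.cons_val]
  abel

theorem jordanPart_le_cTV (μ : ComplexMeasure X) (j : Fin 4) : jordanPart μ j ≤ cTV μ := by
  rw [cTV_eq_sum_jordanPart, ← Finset.add_sum_erase _ _ (Finset.mem_univ j)]
  exact Measure.le_add_right le_rfl

instance isFiniteMeasure_cTV (μ : ComplexMeasure X) : IsFiniteMeasure (cTV μ) := by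
  unfold cTV SignedMeasure.totalVariation
  infer_instance

instance isFiniteMeasure_jordanPart (μ : ComplexMeasure X) (j : Fin 4) :
    IsFiniteMeasure (jordanPart μ j) :=
  isFiniteMeasure_of_le _ (jordanPart_le_cTV μ j)

theorem cInt_eq_jordanIntegral (μ : ComplexMeasure X) (f : X → ℂ) :
    cInt μ f = jordanIntegral μ f := by
  simp only [cInt, jordanIntegral, jordanPart, Fin.sum_univ_four, Matrix.cons_val, smul_eq_mul,
    Fin.coe_ofNat_eq_mod, Nat.reduceMod, pow_zero, pow_one, Complex.I_sq, Complex.I_pow_three]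
  ring

theorem jordanIntegral_clm_comp [CompleteSpace E] [CompleteSpace F] {μ : ComplexMeasure X}
    {f : X → E} (hf : ∀ j, Integrable f (jordanPart μ j)) (L : E →L[ℂ] F) :
    jordanIntegral μ (fun x => L (f x)) = L (jordanIntegral μ f) := by
  simp only [jordanIntegral, map_sum, map_smul, L.integral_comp_comm (hf _)]

theorem cInt_indicator_one (μ : ComplexMeasure X) {A : Set X} (hA : MeasurableSet A) :
    cInt μ (A.indicator 1) = μ A := by
  have hint (m : Measure X) : ∫ x, A.indicator (1 : X → ℂ) x ∂m = m.real A := by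
    simp [Pi.one_def, integral_indicator_const _ hA]
  have hre : (μ A).re = _ := μ.re.apply_eq_posPart_real_sub_negPart_real hA
  have him : (μ A).im = _ := μ.im.apply_eq_posPart_real_sub_negPart_real hA
  rw [← Complex.re_add_im (μ A), hre, him, cInt, mul_comm Complex.I]
  simp only [hint, Complex.ofReal_sub]

end JordanParts

section TotalVariation

variable {X : Type} [MeasurableSpace X] {μ : ComplexMeasure X} {A B : Set X}

theorem cTV_eq_variation_add_variation (μ : ComplexMeasure X) :
    cTV μ = μ.re.variation + μ.im.variation := by
  rw [cTV, SignedMeasure.totalVariation_eq_variation, SignedMeasure.totalVariation_eq_variation]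

theorem cTV_le_variation_add_variation (μ : ComplexMeasure X) :
    cTV μ ≤ μ.variation + μ.variation := by
  rw [cTV_eq_variation_add_variation]
  refine add_le_add ?_ ?_ <;> refine VectorMeasure.variation_le_of_forall_enorm_le fun E _ => ?_
  · exact (enorm_le_iff_norm_le.2 (Complex.abs_re_le_norm (μ E))).trans
      (VectorMeasure.enorm_measure_le_variation μ E)
  · exact (enorm_le_iff_norm_le.2 (Complex.abs_im_le_norm (μ E))).trans
      (VectorMeasure.enorm_measure_le_variation μ E)

theorem cTV_withDensityᵥ_univ_le {m : Measure X} {f : X → ℂ} (hf : Integrable f m) :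
    (cTV (m.withDensityᵥ f) univ).toReal ≤ 2 * ∫ x, ‖f x‖ ∂m := by
  have hvar : (m.withDensityᵥ f).variation univ = ∫⁻ x, ‖f x‖ₑ ∂m := by
    rw [Measure.variation_withDensityᵥ hf, withDensity_apply _ .univ, setLIntegral_univ]
  have hle : cTV (m.withDensityᵥ f) univ ≤ 2 * ∫⁻ x, ‖f x‖ₑ ∂m := by
    simpa only [Measure.add_apply, hvar, ← two_mul] using
      cTV_le_variation_add_variation (m.withDensityᵥ f) univ
  rw [integral_norm_eq_lintegral_enorm hf.aestronglyMeasurable, ← ENNReal.toReal_ofNat,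
    ← ENNReal.toReal_mul]
  exact ENNReal.toReal_mono (ENNReal.mul_ne_top (by simp) hf.2.ne) hle

theorem tendsto_cTV_sub_withDensityᵥ_restrict {ι : Type*} {l : Filter ι} {m : Measure X}
    {f : ι → Lp ℂ 1 m} {g : Lp ℂ 1 m} (hfg : Tendsto f l (𝓝 g)) (A : Set X) :
    Tendsto (fun i => (cTV ((m.restrict A).withDensityᵥ (f i) -
      (m.restrict A).withDensityᵥ g) univ).toReal) l (𝓝 0) := by
  have hnorm : Tendsto (fun i => 2 * ‖f i - g‖) l (𝓝 0) := by
    simpa using (tendsto_iff_norm_sub_tendsto_zero.1 hfg).const_mul 2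
  refine squeeze_zero (fun _ => ENNReal.toReal_nonneg) (fun i => ?_) hnorm
  have hf := L1.integrable_coeFn (f i)
  have hg := L1.integrable_coeFn g
  calc (cTV ((m.restrict A).withDensityᵥ (f i) - (m.restrict A).withDensityᵥ g) univ).toReal
      ≤ 2 * ∫ x in A, ‖f i x - g x‖ ∂m := by
        rw [← withDensityᵥ_sub hf.restrict hg.restrict]
        exact cTV_withDensityᵥ_univ_le (hf.restrict.sub hg.restrict)
    _ ≤ 2 * ∫ x, ‖f i x - g x‖ ∂m := by
        gcongr 2 * ?_
        exact setIntegral_le_integral (hf.sub hg).norm (ae_of_all _ fun _ => norm_nonneg _)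
    _ = 2 * ‖f i - g‖ := by
        rw [L1.norm_eq_integral_norm]
        congr 1
        refine integral_congr_ae ?_
        filter_upwards [Lp.coeFn_sub (f i) g] with x hx
        rw [hx, Pi.sub_apply]

theorem ConcOn.mono (h : ConcOn μ A) (hAB : A ⊆ B) : ConcOn μ B :=
  fun E hE hEB => h E hE (hEB.trans (compl_subset_compl.2 hAB))

theorem ConcOn.apply_inter (h : ConcOn μ A) (hA : MeasurableSet A) {E : Set X}
    (hE : MeasurableSet E) : μ (E ∩ A) = μ E := by
  have hdiff : μ (E \ A) = 0 := h _ (hE.diff hA) fun _ hx => hx.2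
  rw [← VectorMeasure.of_add_of_sdiff (hE.inter hA) hE inter_subset_left, sdiff_self_inter, hdiff,
    add_zero]

theorem ConcOn.cTV_compl_eq_zero (h : ConcOn μ A) (hA : MeasurableSet A) : cTV μ Aᶜ = 0 := by
  rw [cTV_eq_variation_add_variation, Measure.add_apply, add_eq_zero,
    VectorMeasure.variation_apply_eq_zero hA.compl, VectorMeasure.variation_apply_eq_zero hA.compl]
  exact ⟨fun E hEA hE => congrArg Complex.re (h E hE hEA),
    fun E hEA hE => congrArg Complex.im (h E hE hEA)⟩

theorem ConcOn.ae_mem_jordanPart (h : ConcOn μ A) (hA : MeasurableSet A) (j : Fin 4) :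
    ∀ᵐ x ∂jordanPart μ j, x ∈ A :=
  (jordanPart_le_cTV μ j).absolutelyContinuous (h.cTV_compl_eq_zero hA)

end TotalVariation

section Compactness

open scoped Pointwise

theorem isCompact_closedConvexHull {E : Type*} [NormedAddCommGroup E] [NormedSpace ℝ E]
    [CompleteSpace E] {K : Set E} (hK : IsCompact K) : IsCompact (closedConvexHull ℝ K) := by
  rw [closedConvexHull_eq_closure_convexHull]
  exact hK.totallyBounded.convexHull.closure.isCompact_of_isClosed isClosed_closure

theorem integral_mem_smul_of_convex {X E : Type*} [MeasurableSpace X] [NormedAddCommGroup E]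
    [NormedSpace ℝ E] [CompleteSpace E] {K : Set E} (hconv : Convex ℝ K) (hclosed : IsClosed K)
    (hzero : 0 ∈ K) {m : Measure X} [IsFiniteMeasure m] {C : ℝ} (hC : m.real univ ≤ C)
    {f : X → E} (hf : Integrable f m) (hfK : ∀ᵐ x ∂m, f x ∈ K) :
    ∫ x, f x ∂m ∈ Icc (0 : ℝ) C • K := by
  refine ⟨m.real univ, ⟨measureReal_nonneg, hC⟩, ⨍ x, f x ∂m, ?_, measure_smul_average m f⟩
  rcases eq_or_ne m 0 with rfl | hm
  · simpa using hzero
  · have : NeZero m := ⟨hm⟩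
    exact hconv.average_mem hclosed hfK hf

variable {X : Type} [TopologicalSpace X] [MeasurableSpace X] [OpensMeasurableSpace X] [T2Space X]
  {E : Type*} [NormedAddCommGroup E] {f : X → E} {S : Set X}

theorem ConcOn.integrable_jordanPart {ν : ComplexMeasure X} (hν : ConcOn ν S) (hS : IsCompact S)
    (hf : ContinuousOn f S) (j : Fin 4) : Integrable f (jordanPart ν j) := by
  rw [← Measure.restrict_eq_self_of_ae_mem (hν.ae_mem_jordanPart hS.measurableSet j)]
  exact hf.integrableOn_compact hS

theorem exists_isCompact_forall_jordanIntegral_mem [NormedSpace ℂ E] [CompleteSpace E]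
    (hS : IsCompact S) (hf : ContinuousOn f S) (C : ℝ) :
    ∃ K : Set E, IsCompact K ∧ ∀ ν : ComplexMeasure X, ConcOn ν S →
      (cTV ν univ).toReal ≤ C → jordanIntegral ν f ∈ K := by
  set H : Set E := closedConvexHull ℝ (insert 0 (f '' S))
  have hsub : insert 0 (f '' S) ⊆ H := subset_closedConvexHull
  have hH : IsCompact H := isCompact_closedConvexHull ((hS.image_of_continuousOn hf).insert 0)
  have hCH : IsCompact (Icc (0 : ℝ) C • H) := isCompact_Icc.smul_set hH
  refine ⟨(fun x : Fin 4 → E => ∑ j : Fin 4, Complex.I ^ (j : ℕ) • x j) ''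
    univ.pi fun _ => Icc (0 : ℝ) C • H, (isCompact_univ_pi fun _ => hCH).image (by fun_prop),
    fun ν hν hνC => ⟨fun j => ∫ x, f x ∂jordanPart ν j, fun j _ => ?_, rfl⟩⟩
  have hmass : (jordanPart ν j).real univ ≤ C :=
    (ENNReal.toReal_mono (measure_ne_top _ _) (jordanPart_le_cTV ν j univ)).trans hνC
  refine integral_mem_smul_of_convex convex_closedConvexHull isClosed_closedConvexHull
    (hsub (mem_insert _ _)) hmass (hν.integrable_jordanPart hS hf j) ?_
  filter_upwards [hν.ae_mem_jordanPart hS.measurableSet j] with x hx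
  exact hsub (mem_insert_of_mem _ (mem_image_of_mem f hx))

end Compactness

section Density

theorem withDensityᵥ_rnDeriv_eq_of_absolutelyContinuous {X : Type*} [MeasurableSpace X]
    {μ : ComplexMeasure X} {m : Measure X} [SigmaFinite m] (h : μ ≪ᵥ m.toENNRealVectorMeasure) :
    m.withDensityᵥ (μ.rnDeriv m) = μ := by
  obtain ⟨hre, him⟩ := (μ.absolutelyContinuous_ennreal_iff _).1 h
  have hint := μ.integrable_rnDeriv m
  ext E hE
  rw [withDensityᵥ_apply hint hE]
  apply Complex.ext
  · rw [← RCLike.re_eq_complex_re, ← integral_re hint.integrableOn]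
    exact (withDensityᵥ_apply (SignedMeasure.integrable_rnDeriv _ _) hE).symm.trans
      (congrArg (· E) (SignedMeasure.withDensityᵥ_rnDeriv_eq _ m hre))
  · rw [← RCLike.im_eq_complex_im, ← integral_im hint.integrableOn]
    exact (withDensityᵥ_apply (SignedMeasure.integrable_rnDeriv _ _) hE).symm.trans
      (congrArg (· E) (SignedMeasure.withDensityᵥ_rnDeriv_eq _ m him))

/-- `f ↦ ∫ x in A, f x ∂m` as a continuous linear functional on `L¹(m)`. -/
def setIntegralCLM {X : Type*} [MeasurableSpace X] (m : Measure X) (A : Set X) :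
    Lp ℂ 1 m →L[ℂ] ℂ :=
  (L1.integralCLM' ℂ).comp (LpToLpRestrictCLM X ℂ ℂ m 1 A)

theorem setIntegralCLM_apply {X : Type*} [MeasurableSpace X] (m : Measure X) (A : Set X)
    (f : Lp ℂ 1 m) : setIntegralCLM m A f = ∫ x in A, f x ∂m := by
  rw [setIntegralCLM, ContinuousLinearMap.comp_apply, ← L1.integral_eq', L1.integral_eq_integral]
  exact integral_congr_ae (LpToLpRestrictCLM_coeFn ℂ A f)

theorem setIntegral_vadd_Lp {G : Type*} [AddGroup G] [MeasurableSpace G] [MeasurableAdd G]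
    {m : Measure G} [m.IsAddLeftInvariant] {E : Type*} [NormedAddCommGroup E] [NormedSpace ℝ E]
    {p : ENNReal} (A : Set G) (a : G) (f : Lp E p m) :
    ∫ x in A, (DomAddAct.mk (-a) +ᵥ f) x ∂m = ∫ x in (a + ·) ⁻¹' A, f x ∂m := by
  have hpre : (-a + ·) ⁻¹' ((a + ·) ⁻¹' A) = A := by
    simp only [preimage_preimage, add_neg_cancel_left, preimage_id']
  calc ∫ x in A, (DomAddAct.mk (-a) +ᵥ f) x ∂m = ∫ x in A, f (-a + x) ∂m :=
        integral_congr_ae (ae_restrict_of_ae (DomAddAct.vadd_Lp_ae_eq _ f))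
    _ = ∫ x in (-a + ·) ⁻¹' ((a + ·) ⁻¹' A), f (-a + x) ∂m := by rw [hpre]
    _ = ∫ x in (a + ·) ⁻¹' A, f x ∂m :=
        (measurePreserving_add_left m (-a)).setIntegral_preimage_emb
          (measurableEmbedding_addLeft (-a)) f _

end Density

section Convolution

/-- The map `t ↦ t τ_t g` from `ℝ` to `L¹`, where `(τ_t g) x = g (x - t)`: its integral against
`ν` is the density of `(Xν) * μ` when `g` is the density of `μ`. -/
def weightedTranslate (g : Lp ℂ 1 (volume : Measure ℝ)) (t : ℝ) : Lp ℂ 1 (volume : Measure ℝ) :=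
  (t : ℂ) • (DomAddAct.mk (-t) +ᵥ g)

theorem continuous_weightedTranslate (g : Lp ℂ 1 (volume : Measure ℝ)) :
    Continuous (weightedTranslate g) := by
  have : Fact ((1 : ENNReal) ≠ ⊤) := ⟨ENNReal.one_ne_top⟩
  have htranslate : Continuous fun t : ℝ => DomAddAct.mk (-t) +ᵥ g :=
    (DomAddAct.continuous_mk.comp continuous_neg).vadd continuous_const
  exact Complex.continuous_ofReal.smul htranslate

theorem setIntegralCLM_weightedTranslate {μ : ComplexMeasure ℝ} {g : Lp ℂ 1 (volume : Measure ℝ)}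
    (hg : volume.withDensityᵥ g = μ) {A : Set ℝ} (hA : MeasurableSet A) (t : ℝ) :
    setIntegralCLM volume A (weightedTranslate g t) =
      (t : ℂ) * cInt μ fun s => A.indicator (1 : ℝ → ℂ) (t + s) := by
  have hpre : MeasurableSet ((t + ·) ⁻¹' A) := measurable_const_add t hA
  have hcInt : cInt μ (fun s => A.indicator (1 : ℝ → ℂ) (t + s)) = μ ((t + ·) ⁻¹' A) :=
    cInt_indicator_one μ hpre
  rw [weightedTranslate, map_smul, smul_eq_mul, setIntegralCLM_apply, setIntegral_vadd_Lp, hcInt,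
    ← hg, withDensityᵥ_apply (L1.integrable_coeFn g) hpre]

theorem IsXConv.eq_withDensityᵥ {μ ν ρ : ComplexMeasure ℝ} (h : IsXConv μ ν ρ)
    {g : Lp ℂ 1 (volume : Measure ℝ)} (hg : volume.withDensityᵥ g = μ)
    (hint : ∀ j, Integrable (weightedTranslate g) (jordanPart ν j)) :
    ρ = (volume.restrict (Ico 0 1)).withDensityᵥ ⇑(jordanIntegral ν (weightedTranslate g)) := by
  ext E hE
  have hEI : MeasurableSet (E ∩ Ico (0 : ℝ) 1) := hE.inter measurableSet_Ico
  rw [← h.1.apply_inter measurableSet_Ico hE, h.2 _ hEI inter_subset_right,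
    withDensityᵥ_apply (L1.integrable_coeFn _).restrict hE, Measure.restrict_restrict hE,
    ← setIntegralCLM_apply, ← jordanIntegral_clm_comp hint, ← cInt_eq_jordanIntegral]
  simp only [setIntegralCLM_weightedTranslate hg hEI]

end Convolution

theorem Dbar_compact_on_M_general (μ : ComplexMeasure ℝ)
    (hac : μ ≪ᵥ (volume : Measure ℝ).toENNRealVectorMeasure)
    {S : Set ℝ} (hS : IsCompact S) {C : ℝ} {ν : ℕ → ComplexMeasure ℝ}
    (hνS : ∀ k, ConcOn (ν k) S) (hνC : ∀ k, (cTV (ν k) univ).toReal ≤ C)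
    {ρ : ℕ → ComplexMeasure ℝ} (hρ : ∀ k, IsXConv μ (ν k) (ρ k)) :
    ∃ φ : ℕ → ℕ, StrictMono φ ∧ ∃ ρ₀ : ComplexMeasure ℝ,
      Tendsto (fun k => (cTV (ρ (φ k) - ρ₀) univ).toReal) atTop (𝓝 0) := by
  obtain ⟨g, hg⟩ : ∃ g : Lp ℂ 1 (volume : Measure ℝ), volume.withDensityᵥ g = μ := by
    have hint := μ.integrable_rnDeriv volume
    refine ⟨hint.toL1 _, ?_⟩
    rw [WithDensityᵥEq.congr_ae hint.coeFn_toL1,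
      withDensityᵥ_rnDeriv_eq_of_absolutelyContinuous hac]
  have hcont : ContinuousOn (weightedTranslate g) S := (continuous_weightedTranslate g).continuousOn
  obtain ⟨K, hK, hmem⟩ := exists_isCompact_forall_jordanIntegral_mem hS hcont C
  obtain ⟨G, -, φ, hφ, hlim⟩ := hK.tendsto_subseq fun k => hmem (ν k) (hνS k) (hνC k)
  have hdensity (k : ℕ) := (hρ k).eq_withDensityᵥ hg ((hνS k).integrable_jordanPart hS hcont)
  refine ⟨φ, hφ, (volume.restrict (Ico 0 1)).withDensityᵥ G, ?_⟩
  simpa only [hdensity, Function.comp_apply] using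
    tendsto_cTV_sub_withDensityᵥ_restrict hlim (Ico 0 1)

/-- Let `μ` be an absolutely continuous finite complex Borel measure on
`[0,1)` with `t |μ|([0,1-t)) → 0` as `t → 0⁺`. Then the operator `D̄_μ ν = (Xν) * μ` on
`M[0,1)` is compact: the image of the (total variation) unit ball is relatively
norm-compact, expressed here sequentially (equivalent, since the total variation norm
induces a metric). -/
theorem Dbar_compact_on_M (μ : ComplexMeasure ℝ)
    (hμc : ConcOn μ (Ico 0 1))
    (hac : ∀ E : Set ℝ, MeasurableSet E → volume E = 0 → μ E = 0)
    (h0 : Tendsto (fun t : ℝ => t * (cTV μ (Ico 0 (1 - t))).toReal)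
      (nhdsWithin 0 (Ioi 0)) (nhds 0)) :
    ∀ ν : ℕ → ComplexMeasure ℝ, (∀ k, ConcOn (ν k) (Ico 0 1)) →
      (∀ k, (cTV (ν k) univ).toReal ≤ 1) →
      ∀ ρ : ℕ → ComplexMeasure ℝ, (∀ k, IsXConv μ (ν k) (ρ k)) →
        ∃ φ : ℕ → ℕ, StrictMono φ ∧
          ∃ ρ₀ : ComplexMeasure ℝ,
            Tendsto (fun k => (cTV (ρ (φ k) - ρ₀) univ).toReal) atTop (nhds 0) := by
  intro ν hν hν1 ρ hρ
  exact Dbar_compact_on_M_general μ (.mk fun E hE hE0 => hac E hE (by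
    rwa [Measure.toENNRealVectorMeasure_apply_measurable hE] at hE0)) isCompact_Icc
    (fun k => (hν k).mono Ico_subset_Icc_self) hν1 hρ
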